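/- arXiv:2212.13600 — 4 statements merged into one kernel-verified Lean document; each statement's English description precedes it below -/
import Mathlib

section
/- Let (A,·,[·,·,·]) be a ternary F-manifold algebra. There exists a ternary pre-F-manifold algebra structure (⋄,{·,·,·}) on A whose sub-adjacent ternary F-manifold algebra is exactly (A,·,[·,·,·]) (i.e. x⋄y + y⋄x = x·y and {x,y,z} + {y,z,x} + {z,x,y} = [x,y,z] for all x,y,z ∈ A) if and only if there exists a representation (V;ρ,μ) of A and an invertible relative Rota–Baxter operator T : V → A on A with respect to (V;ρ,μ). -/
open TensorProduct

/-- The 3-Leibnizator `L(x1,x2,x3,x4) = [x1,x2,x3·x4] − x3·[x1,x2,x4] − [x1,x2,x3]·x4`. -/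
def leib3 {K : Type*} [Field K] {A : Type*} [AddCommGroup A] [Module K A]
    (m : A →ₗ[K] A →ₗ[K] A) (b : A →ₗ[K] A →ₗ[K] A →ₗ[K] A) (x1 x2 x3 x4 : A) : A :=
  b x1 x2 (m x3 x4) - m x3 (b x1 x2 x4) - m (b x1 x2 x3) x4

/-- A ternary F-manifold algebra. -/
structure TernaryFM (K : Type*) [Field K] (A : Type*) [AddCommGroup A] [Module K A] where
  mul : A →ₗ[K] A →ₗ[K] A
  br : A →ₗ[K] A →ₗ[K] A →ₗ[K] A
  mul_comm : ∀ x y, mul x y = mul y x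
  mul_assoc : ∀ x y z, mul (mul x y) z = mul x (mul y z)
  br_skew₁₂ : ∀ x y z, br x y z = - br y x z
  br_skew₂₃ : ∀ x y z, br x y z = - br x z y
  fund : ∀ x1 x2 x3 x4 x5,
    br x1 x2 (br x3 x4 x5) =
      br (br x1 x2 x3) x4 x5 + br x3 (br x1 x2 x4) x5 + br x3 x4 (br x1 x2 x5)
  leib : ∀ x1 x2 x3 x4 x5,
    leib3 mul br (mul x1 x2) x3 x4 x5 =
      mul x1 (leib3 mul br x2 x3 x4 x5) + mul x2 (leib3 mul br x1 x3 x4 x5)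

/-- A commutative associative algebra structure (as a bilinear map). -/
structure CommAssocAlg (K : Type*) [Field K] (B : Type*) [AddCommGroup B] [Module K B] where
  mul : B →ₗ[K] B →ₗ[K] B
  mul_comm : ∀ x y, mul x y = mul y x
  mul_assoc : ∀ x y z, mul (mul x y) z = mul x (mul y z)

/-- A ternary Nambu–Poisson algebra. -/
structure TernaryNP (K : Type*) [Field K] (A : Type*) [AddCommGroup A] [Module K A] where
  mul : A →ₗ[K] A →ₗ[K] A
  br : A →ₗ[K] A →ₗ[K] A →ₗ[K] A
  mul_comm : ∀ x y, mul x y = mul y x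
  mul_assoc : ∀ x y z, mul (mul x y) z = mul x (mul y z)
  br_skew₁₂ : ∀ x y z, br x y z = - br y x z
  br_skew₂₃ : ∀ x y z, br x y z = - br x z y
  fund : ∀ x1 x2 x3 x4 x5,
    br x1 x2 (br x3 x4 x5) =
      br (br x1 x2 x3) x4 x5 + br x3 (br x1 x2 x4) x5 + br x3 x4 (br x1 x2 x5)
  leibniz : ∀ x1 x2 x3 x4,
    br x1 x2 (mul x3 x4) = mul x3 (br x1 x2 x4) + mul (br x1 x2 x3) x4

/-- The binary Leibnizator `L(x,y,z) = [x,y·z] − [x,y]·z − y·[x,z]`. -/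
def leib2 {K : Type*} [Field K] {A : Type*} [AddCommGroup A] [Module K A]
    (m : A →ₗ[K] A →ₗ[K] A) (b : A →ₗ[K] A →ₗ[K] A) (x y z : A) : A :=
  b x (m y z) - m (b x y) z - m y (b x z)

/-- An F-manifold algebra. -/
structure FManifoldAlg (K : Type*) [Field K] (A : Type*) [AddCommGroup A] [Module K A] where
  mul : A →ₗ[K] A →ₗ[K] A
  br : A →ₗ[K] A →ₗ[K] A
  mul_comm : ∀ x y, mul x y = mul y x
  mul_assoc : ∀ x y z, mul (mul x y) z = mul x (mul y z)
  br_skew : ∀ x y, br x y = - br y x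
  jacobi : ∀ x y z, br x (br y z) + br y (br z x) + br z (br x y) = 0
  hm : ∀ x y z w,
    leib2 mul br (mul x y) z w = mul x (leib2 mul br y z w) + mul y (leib2 mul br x z w)

section Rep

variable {K : Type*} [Field K] {A V : Type*} [AddCommGroup A] [Module K A]
  [AddCommGroup V] [Module K V]

/-- Representation of the underlying 3-Lie algebra. -/
def Is3LieRep (T : TernaryFM K A) (ρ : A →ₗ[K] A →ₗ[K] V →ₗ[K] V) : Prop :=
  (∀ x y, ρ x y = - ρ y x) ∧
  (∀ x1 x2 x3 x4,
    ρ x1 x2 ∘ₗ ρ x3 x4 - ρ x3 x4 ∘ₗ ρ x1 x2 = ρ (T.br x1 x2 x3) x4 - ρ (T.br x1 x2 x4) x3) ∧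
  (∀ x1 x2 x3 x4,
    ρ (T.br x1 x2 x3) x4 = ρ x1 x2 ∘ₗ ρ x3 x4 + ρ x2 x3 ∘ₗ ρ x1 x4 + ρ x3 x1 ∘ₗ ρ x2 x4)

/-- Representation of the underlying commutative associative algebra. -/
def IsAssocRep (T : TernaryFM K A) (μ : A →ₗ[K] V →ₗ[K] V) : Prop :=
  ∀ x y, μ (T.mul x y) = μ x ∘ₗ μ y

/-- `L1(x,y,z,u) = ρ(x,y)μ(z)u − μ(z)ρ(x,y)u − μ([x,y,z])u`. -/
def L1 (T : TernaryFM K A) (ρ : A →ₗ[K] A →ₗ[K] V →ₗ[K] V) (μ : A →ₗ[K] V →ₗ[K] V)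
    (x y z : A) (u : V) : V :=
  ρ x y (μ z u) - μ z (ρ x y u) - μ (T.br x y z) u

/-- `L2(x,y,z,u) = μ(z)ρ(x,y)u + μ(y)ρ(x,z)u − ρ(x,y·z)u`. -/
def L2 (T : TernaryFM K A) (ρ : A →ₗ[K] A →ₗ[K] V →ₗ[K] V) (μ : A →ₗ[K] V →ₗ[K] V)
    (x y z : A) (u : V) : V :=
  μ z (ρ x y u) + μ y (ρ x z u) - ρ x (T.mul y z) u

/-- `L3(x,y,z,u) = ρ(x,y)μ(z)u + ρ(x,z)μ(y)u − ρ(x,y·z)u`. -/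
def L3 (T : TernaryFM K A) (ρ : A →ₗ[K] A →ₗ[K] V →ₗ[K] V) (μ : A →ₗ[K] V →ₗ[K] V)
    (x y z : A) (u : V) : V :=
  ρ x y (μ z u) + ρ x z (μ y u) - ρ x (T.mul y z) u

/-- Representation of a ternary F-manifold algebra. -/
def IsFMRep (T : TernaryFM K A) (ρ : A →ₗ[K] A →ₗ[K] V →ₗ[K] V)
    (μ : A →ₗ[K] V →ₗ[K] V) : Prop :=
  Is3LieRep T ρ ∧ IsAssocRep T μ ∧
  (∀ x1 x2 x3 x4 u, L1 T ρ μ (T.mul x1 x2) x3 x4 u =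
      μ x1 (L1 T ρ μ x2 x3 x4 u) + μ x2 (L1 T ρ μ x1 x3 x4 u)) ∧
  (∀ x1 x2 x3 x4 u, L2 T ρ μ (T.mul x1 x2) x3 x4 u =
      μ x1 (L2 T ρ μ x2 x3 x4 u) + μ x2 (L2 T ρ μ x1 x3 x4 u)) ∧
  (∀ x1 x2 x3 x4 u, μ (leib3 T.mul T.br x1 x2 x3 x4) u =
      L2 T ρ μ x2 x3 x4 (μ x1 u) - μ x1 (L2 T ρ μ x2 x3 x4 u))

/-- Relative Rota–Baxter operator on a ternary F-manifold algebra. -/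
def IsRelRB (T : TernaryFM K A) (ρ : A →ₗ[K] A →ₗ[K] V →ₗ[K] V)
    (μ : A →ₗ[K] V →ₗ[K] V) (Tm : V →ₗ[K] A) : Prop :=
  (∀ u v, T.mul (Tm u) (Tm v) = Tm (μ (Tm u) v + μ (Tm v) u)) ∧
  (∀ u v w, T.br (Tm u) (Tm v) (Tm w) =
      Tm (ρ (Tm u) (Tm v) w + ρ (Tm v) (Tm w) u + ρ (Tm w) (Tm u) v))

end Rep

section Pre

variable {K : Type*} [Field K] {A : Type*} [AddCommGroup A] [Module K A]

/-- Cyclic sum bracket `[x,y,z]^C = {x,y,z} + {y,z,x} + {z,x,y}`. -/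
def cbr (t : A →ₗ[K] A →ₗ[K] A →ₗ[K] A) (x y z : A) : A :=
  t x y z + t y z x + t z x y

/-- Symmetrized product `x·y = x⋄y + y⋄x`. -/
def sym (d : A →ₗ[K] A →ₗ[K] A) (x y : A) : A := d x y + d y x

/-- `F1(x1,x2,x3,x4) = {x1,x2,x3⋄x4} − x3⋄{x1,x2,x4} − [x1,x2,x3]⋄x4`. -/
def F1 (d : A →ₗ[K] A →ₗ[K] A) (t : A →ₗ[K] A →ₗ[K] A →ₗ[K] A) (x1 x2 x3 x4 : A) : A :=
  t x1 x2 (d x3 x4) - d x3 (t x1 x2 x4) - d (cbr t x1 x2 x3) x4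

/-- `F2(x1,x2,x3,x4) = x3⋄{x1,x2,x4} + x2⋄{x1,x3,x4} − {x1,x2·x3,x4}`. -/
def F2 (d : A →ₗ[K] A →ₗ[K] A) (t : A →ₗ[K] A →ₗ[K] A →ₗ[K] A) (x1 x2 x3 x4 : A) : A :=
  d x3 (t x1 x2 x4) + d x2 (t x1 x3 x4) - t x1 (sym d x2 x3) x4

/-- The 3-Leibnizator of the sub-adjacent operations. -/
def Lpre (d : A →ₗ[K] A →ₗ[K] A) (t : A →ₗ[K] A →ₗ[K] A →ₗ[K] A) (x1 x2 x3 x4 : A) : A :=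
  cbr t x1 x2 (sym d x3 x4) - sym d x3 (cbr t x1 x2 x4) - sym d (cbr t x1 x2 x3) x4

/-- A 3-pre-Lie algebra. -/
structure ThreePreLie (K : Type*) [Field K] (A : Type*) [AddCommGroup A] [Module K A] where
  tri : A →ₗ[K] A →ₗ[K] A →ₗ[K] A
  tri_skew : ∀ x y z, tri x y z = - tri y x z
  preLie₁ : ∀ x1 x2 x3 x4 x5,
    tri x1 x2 (tri x3 x4 x5) =
      tri (cbr tri x1 x2 x3) x4 x5 + tri x3 (cbr tri x1 x2 x4) x5 + tri x3 x4 (tri x1 x2 x5)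
  preLie₂ : ∀ x1 x2 x3 x4 x5,
    tri (cbr tri x1 x2 x3) x4 x5 =
      tri x1 x2 (tri x3 x4 x5) + tri x2 x3 (tri x1 x4 x5) + tri x3 x1 (tri x2 x4 x5)

/-- A ternary pre-F-manifold algebra. -/
structure TernaryPreFM (K : Type*) [Field K] (A : Type*) [AddCommGroup A] [Module K A] where
  dia : A →ₗ[K] A →ₗ[K] A
  tri : A →ₗ[K] A →ₗ[K] A →ₗ[K] A
  zinbiel : ∀ x y z, dia x (dia y z) = dia (dia y x) z + dia (dia x y) z
  tri_skew : ∀ x y z, tri x y z = - tri y x z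
  preLie₁ : ∀ x1 x2 x3 x4 x5,
    tri x1 x2 (tri x3 x4 x5) =
      tri (cbr tri x1 x2 x3) x4 x5 + tri x3 (cbr tri x1 x2 x4) x5 + tri x3 x4 (tri x1 x2 x5)
  preLie₂ : ∀ x1 x2 x3 x4 x5,
    tri (cbr tri x1 x2 x3) x4 x5 =
      tri x1 x2 (tri x3 x4 x5) + tri x2 x3 (tri x1 x4 x5) + tri x3 x1 (tri x2 x4 x5)
  pf1 : ∀ x1 x2 x3 x4 x5,
    F1 dia tri (sym dia x1 x2) x3 x4 x5 =
      dia x1 (F1 dia tri x2 x3 x4 x5) + dia x2 (F1 dia tri x1 x3 x4 x5)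
  pf2 : ∀ x1 x2 x3 x4 x5,
    F2 dia tri (sym dia x1 x2) x3 x4 x5 =
      dia x1 (F2 dia tri x2 x3 x4 x5) + dia x2 (F2 dia tri x1 x3 x4 x5)
  pf3 : ∀ x1 x2 x3 x4 x5,
    dia (Lpre dia tri x1 x2 x3 x4) x5 =
      F2 dia tri x2 x3 x4 (dia x1 x5) - dia x1 (F2 dia tri x2 x3 x4 x5)

/-- A ternary pre-Nambu–Poisson algebra. -/
structure TernaryPreNP (K : Type*) [Field K] (A : Type*) [AddCommGroup A] [Module K A] where
  dia : A →ₗ[K] A →ₗ[K] A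
  tri : A →ₗ[K] A →ₗ[K] A →ₗ[K] A
  zinbiel : ∀ x y z, dia x (dia y z) = dia (dia y x) z + dia (dia x y) z
  tri_skew : ∀ x y z, tri x y z = - tri y x z
  preLie₁ : ∀ x1 x2 x3 x4 x5,
    tri x1 x2 (tri x3 x4 x5) =
      tri (cbr tri x1 x2 x3) x4 x5 + tri x3 (cbr tri x1 x2 x4) x5 + tri x3 x4 (tri x1 x2 x5)
  preLie₂ : ∀ x1 x2 x3 x4 x5,
    tri (cbr tri x1 x2 x3) x4 x5 =
      tri x1 x2 (tri x3 x4 x5) + tri x2 x3 (tri x1 x4 x5) + tri x3 x1 (tri x2 x4 x5)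
  np1 : ∀ x1 x2 x3 x4,
    tri x1 x2 (dia x3 x4) = dia x3 (tri x1 x2 x4) + dia (cbr tri x1 x2 x3) x4
  np2 : ∀ x1 x2 x3 x4,
    tri x1 (sym dia x2 x3) x4 = dia x3 (tri x1 x2 x4) + dia x2 (tri x1 x3 x4)

end Pre

/-- The coherence map `K(x,y,z,u) = [x,y,z·u] + [x,z,u·y] + [x,u,y·z]`. -/
def kmap {K : Type*} [Field K] {A : Type*} [AddCommGroup A] [Module K A]
    (T : TernaryFM K A) (x y z u : A) : A :=
  T.br x y (T.mul z u) + T.br x z (T.mul u y) + T.br x u (T.mul y z)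

section SD

variable {K : Type*} [Field K] {A V : Type*} [AddCommGroup A] [Module K A]
  [AddCommGroup V] [Module K V]

/-- Semidirect product multiplication on `A × V`. -/
def sdMul (T : TernaryFM K A) (μ : A →ₗ[K] V →ₗ[K] V) (p q : A × V) : A × V :=
  (T.mul p.1 q.1, μ p.1 q.2 + μ q.1 p.2)

/-- Semidirect product ternary bracket on `A × V`. -/
def sdBr (T : TernaryFM K A) (ρ : A →ₗ[K] A →ₗ[K] V →ₗ[K] V) (p q r : A × V) : A × V :=
  (T.br p.1 q.1 r.1, ρ p.1 q.1 r.2 - ρ p.1 r.1 q.2 + ρ q.1 r.1 p.2)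

/-- The Nijenhuis operator `N_T(x+u) = Tu` on `A × V`. -/
def nT (Tm : V →ₗ[K] A) (p : A × V) : A × V := (Tm p.2, 0)

end SD

universe u

/-- a ternary F-manifold algebra admits a compatible ternary
pre-F-manifold algebra structure iff there is an invertible relative
Rota–Baxter operator with respect to some representation. -/
theorem stmt15 {K : Type*} [Field K] [CharZero K]
    {A : Type u} [AddCommGroup A] [Module K A] (T : TernaryFM K A) :
    (∃ P : TernaryPreFM K A,
      (∀ x y, sym P.dia x y = T.mul x y) ∧
      (∀ x y z, cbr P.tri x y z = T.br x y z)) ↔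
    (∃ (V : ModuleCat.{u} K) (ρ : A →ₗ[K] A →ₗ[K] V →ₗ[K] V)
        (μ : A →ₗ[K] V →ₗ[K] V) (Tm : V →ₗ[K] A),
      IsFMRep T ρ μ ∧ IsRelRB T ρ μ Tm ∧ Function.Bijective Tm) := by
  constructor
  · rintro ⟨P, hm, hb⟩
    refine ⟨ModuleCat.of K A, P.tri, P.dia, LinearMap.id, ⟨⟨?_, ?_, ?_⟩, ?_, ?_, ?_, ?_⟩,
      ⟨?_, ?_⟩, Function.bijective_id⟩
    · intro x y
      ext z
      exact P.tri_skew x y z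
    · intro x1 x2 x3 x4
      refine LinearMap.ext fun z => ?_
      have h := P.preLie₁ x1 x2 x3 x4 z
      rw [hb, hb, P.tri_skew x3 (T.br x1 x2 x4) z] at h
      change P.tri x1 x2 (P.tri x3 x4 z) - P.tri x3 x4 (P.tri x1 x2 z) =
        P.tri (T.br x1 x2 x3) x4 z - P.tri (T.br x1 x2 x4) x3 z
      rw [h]
      abel
    · intro x1 x2 x3 x4
      refine LinearMap.ext fun z => ?_
      have h := P.preLie₂ x1 x2 x3 x4 z
      rw [hb] at h
      exact h
    · intro x y
      refine LinearMap.ext fun z => ?_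
      have h := P.zinbiel x y z
      change P.dia (T.mul x y) z = P.dia x (P.dia y z)
      rw [h, ← hm, sym, map_add, LinearMap.add_apply, add_comm]
    · intro x1 x2 x3 x4 z
      have h := P.pf1 x1 x2 x3 x4 z
      simp only [F1, hb, hm] at h
      exact h
    · intro x1 x2 x3 x4 z
      have h := P.pf2 x1 x2 x3 x4 z
      simp only [F2, hm] at h
      exact h
    · intro x1 x2 x3 x4 z
      have h := P.pf3 x1 x2 x3 x4 z
      simp only [Lpre, F2, hb, hm] at h
      exact h
    · intro u v
      exact (hm u v).symm
    · intro u v w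
      exact (hb u v w).symm
  · rintro ⟨V, ρ, μ, Tm, ⟨⟨r1, r2, r3⟩, ha, h1, h2, h3⟩, ⟨hm, hb⟩, hbij⟩
    let e : V ≃ₗ[K] A := LinearEquiv.ofBijective Tm hbij
    have he : ∀ v, Tm v = e v := fun v => rfl
    let d : A →ₗ[K] A →ₗ[K] A := e.conj.toLinearMap ∘ₗ μ
    let t : A →ₗ[K] A →ₗ[K] A →ₗ[K] A := ρ.compr₂ e.conj.toLinearMap
    have hd : ∀ x y, d x y = e (μ x (e.symm y)) := fun x y => rfl
    have ht : ∀ x y z, t x y z = e (ρ x y (e.symm z)) := fun x y z => rfl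
    have hs : ∀ x y, sym d x y = T.mul x y := by
      intro x y
      have h := hm (e.symm x) (e.symm y)
      simp only [he, LinearEquiv.apply_symm_apply] at h
      rw [h, sym, hd, hd, map_add]
    have hc : ∀ x y z, cbr t x y z = T.br x y z := by
      intro x y z
      have h := hb (e.symm x) (e.symm y) (e.symm z)
      simp only [he, LinearEquiv.apply_symm_apply] at h
      rw [h, cbr, ht, ht, ht, map_add, map_add]
    have hF1 : ∀ x y z w, F1 d t x y z w = e (L1 T ρ μ x y z (e.symm w)) := by
      intro x y z w
      simp only [F1, L1, hc, hd, ht, LinearEquiv.symm_apply_apply, map_sub]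
    have hF2 : ∀ x y z w, F2 d t x y z w = e (L2 T ρ μ x y z (e.symm w)) := by
      intro x y z w
      simp only [F2, L2, hs, hd, ht, LinearEquiv.symm_apply_apply, map_sub, map_add]
    have hL : ∀ x y z w, Lpre d t x y z w = leib3 T.mul T.br x y z w := by
      intro x y z w
      simp only [Lpre, leib3, hs, hc]
    refine ⟨⟨d, t, ?_, ?_, ?_, ?_, ?_, ?_, ?_⟩, hs, hc⟩
    · intro x y z
      rw [← LinearMap.add_apply, ← map_add]
      change _ = d (sym d y x) z
      rw [hs, T.mul_comm, hd, hd, hd, ha]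
      simp
    · intro x y z
      rw [ht, ht, r1 x y]
      simp
    · intro x1 x2 x3 x4 x5
      have h := LinearMap.congr_fun (r2 x1 x2 x3 x4) (e.symm x5)
      simp only [LinearMap.sub_apply, LinearMap.comp_apply] at h
      simp only [hc, ht, LinearEquiv.symm_apply_apply, r1 x3 (T.br x1 x2 x4)]
      rw [← map_add, ← map_add, sub_eq_iff_eq_add.mp h, LinearMap.neg_apply, sub_eq_add_neg]
    · intro x1 x2 x3 x4 x5
      have h := LinearMap.congr_fun (r3 x1 x2 x3 x4) (e.symm x5)
      simp only [LinearMap.add_apply, LinearMap.comp_apply] at h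
      simp only [hc, ht, LinearEquiv.symm_apply_apply]
      rw [h, map_add, map_add]
    · intro x1 x2 x3 x4 x5
      rw [hs, hF1, hF1, hF1, h1, hd, hd]
      simp
    · intro x1 x2 x3 x4 x5
      rw [hs, hF2, hF2, hF2, h2, hd, hd]
      simp
    · intro x1 x2 x3 x4 x5
      rw [hL, hF2, hF2, hd, h3, hd, hd]
      simp
end

section
/- Let (A,·,[·,·,·]) be a finite-dimensional coherence ternary F-manifold algebra and let B be a nondegenerate skew-symmetric bilinear form on A satisfying the cyclic 2-cocycle condition B(x·y,z) + B(y·z,x) + B(z·x,y) = 0 and the symplectic condition B([x,y,z],u) − B([x,y,u],z) + B([x,z,u],y) − B([y,z,u],x) = 0 for all x,y,z,u ∈ A. Then there exists a ternary pre-F-manifold algebra structure (⋄,{·,·,·}) on A, determined by B(x⋄y,z) = B(y,x·z) and B({x,y,z},u) = −B(z,[x,y,u]), whose sub-adjacent ternary F-manifold algebra is (A,·,[·,·,·]). -/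
open TensorProduct

section Helpers

variable {K : Type*} [Field K] {A : Type*} [AddCommGroup A] [Module K A]

theorem br_cyc (T : TernaryFM K A) (x y z : A) : T.br x y z = T.br y z x := by
  rw [T.br_skew₁₂ x y z, T.br_skew₂₃ y x z, neg_neg]

/-- The fundamental identity with every inner bracket in last position. -/
theorem fund' (T : TernaryFM K A) (a b c d e : A) :
    T.br a b (T.br c d e) =
      T.br d e (T.br a b c) + T.br e c (T.br a b d) + T.br c d (T.br a b e) := by
  rw [T.fund a b c d e, br_cyc T (T.br a b c) d e, ← br_cyc T e c (T.br a b d)]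

theorem inner_swap₁ (T : TernaryFM K A) (a b c d e : A) :
    T.br a b (T.br c d e) = - T.br a b (T.br d c e) := by
  rw [T.br_skew₁₂ c d e, map_neg]

theorem inner_swap₂ (T : TernaryFM K A) (a b c d e : A) :
    T.br a b (T.br c d e) = - T.br a b (T.br c e d) := by
  rw [T.br_skew₂₃ c d e, map_neg]

/-- The identity making the coadjoint action a representation. -/
theorem coadj [CharZero K] (T : TernaryFM K A) (a b c d e : A) :
    T.br d e (T.br a b c) + T.br c d (T.br a b e) + T.br a d (T.br b c e)
      + T.br b d (T.br c a e) = 0 := by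
  have f12 := fund' T a b c d e
  have f13 := fund' T a c b d e
  have f14 := fund' T a d b c e
  have f15 := fund' T a e b c d
  have f23 := fund' T b c a d e
  have f24 := fund' T b d a c e
  have f25 := fund' T b e a c d
  have f34 := fund' T c d a b e
  have f35 := fund' T c e a b d
  have f45 := fund' T d e a b c
  simp only [T.br_skew₁₂ b a, T.br_skew₁₂ c a, T.br_skew₁₂ d a, T.br_skew₁₂ e a,
    T.br_skew₁₂ c b, T.br_skew₁₂ d b, T.br_skew₁₂ e b, T.br_skew₁₂ d c, T.br_skew₁₂ e c,
    T.br_skew₂₃ a c b, T.br_skew₂₃ a d b, T.br_skew₂₃ a e b,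
    T.br_skew₂₃ a d c, T.br_skew₂₃ a e c, T.br_skew₂₃ a e d,
    T.br_skew₂₃ b d c, T.br_skew₂₃ b e c, T.br_skew₂₃ b e d, T.br_skew₂₃ c e d,
    T.br_skew₂₃ b c a, T.br_skew₂₃ b d a, T.br_skew₂₃ b e a, T.br_skew₂₃ c d a,
    T.br_skew₂₃ c e a, T.br_skew₂₃ d e a, T.br_skew₂₃ c d b,
    T.br_skew₂₃ c e b, T.br_skew₂₃ d e b, T.br_skew₂₃ d e c, map_neg, neg_neg] at *
  have h : (3 : K) • (T.br d e (T.br a b c) + T.br c d (T.br a b e) + T.br a d (T.br b c e)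
      - T.br b d (T.br a c e)) = 0 := by
    linear_combination (norm := module) -f12 + f13 + f15 - f23 - f25 + f35
  have h2 := (smul_eq_zero.mp h).resolve_left three_ne_zero
  rw [← h2]
  abel

theorem leib3_skew (T : TernaryFM K A) (x y z t : A) :
    leib3 T.mul T.br x y z t = - leib3 T.mul T.br y x z t := by
  unfold leib3
  rw [T.br_skew₁₂ x y (T.mul z t), T.br_skew₁₂ x y z, T.br_skew₁₂ x y t]
  simp only [map_neg, LinearMap.neg_apply]
  abel

/-- `K` is the cyclic sum of the Leibnizator. -/
theorem kmap_eq (T : TernaryFM K A) (x y z u : A) :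
    kmap T x y z u = leib3 T.mul T.br x y z u + leib3 T.mul T.br x z u y
      + leib3 T.mul T.br x u y z := by
  unfold leib3 kmap
  rw [T.mul_comm (T.br x y z) u, T.mul_comm (T.br x z u) y, T.mul_comm (T.br x u y) z,
    T.br_skew₂₃ x z y, T.br_skew₂₃ x u z, T.br_skew₂₃ x y u]
  simp only [map_neg]
  abel

theorem kmap_leib (T : TernaryFM K A) (x y z t u : A) :
    kmap T (T.mul x y) z t u = T.mul x (kmap T y z t u) + T.mul y (kmap T x z t u) := by
  simp only [kmap_eq, T.leib, map_add]
  abel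

/-- In characteristic zero, the coherence conditions force `K(x·y,z,t,u) = 0`. -/
theorem kmap_mul_zero [CharZero K] (T : TernaryFM K A)
    (hc2 : ∀ x y z t u, kmap T (T.mul x y) z t u =
      - kmap T x z t (T.mul y u) - kmap T y z t (T.mul x u))
    (hc3 : ∀ x y z t u, T.mul (leib3 T.mul T.br x y z t) u =
      kmap T y z t (T.mul x u) - T.mul x (kmap T y z t u)) (x y z t u : A) :
    kmap T (T.mul x y) z t u = 0 := by
  have h1 := hc3 x y z t u
  have h2 := hc3 y x z t u
  rw [leib3_skew T y x, map_neg, LinearMap.neg_apply] at h2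
  have h3 := hc2 x y z t u
  have h4 := kmap_leib T x y z t u
  have h : (2 : K) • kmap T (T.mul x y) z t u = 0 := by
    linear_combination (norm := module) h1 + h2 + h3 + h4
  exact (smul_eq_zero.mp h).resolve_left two_ne_zero

end Helpers

/-- a coherence ternary F-manifold algebra with a nondegenerate
skew-symmetric cyclic 2-cocycle which is a symplectic structure carries a
compatible ternary pre-F-manifold algebra structure determined by `B`. -/
theorem stmt16 {K : Type*} [Field K] [CharZero K]
    {A : Type*} [AddCommGroup A] [Module K A] [FiniteDimensional K A]
    (T : TernaryFM K A)
    (hc1 : ∀ x y z t u, leib3 T.mul T.br (T.mul x y) z t u =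
      leib3 T.mul T.br y z t (T.mul x u) + leib3 T.mul T.br x z t (T.mul y u))
    (hc2 : ∀ x y z t u, kmap T (T.mul x y) z t u =
      - kmap T x z t (T.mul y u) - kmap T y z t (T.mul x u))
    (hc3 : ∀ x y z t u, T.mul (leib3 T.mul T.br x y z t) u =
      kmap T y z t (T.mul x u) - T.mul x (kmap T y z t u))
    (B : A →ₗ[K] A →ₗ[K] K)
    (hBskew : ∀ x y, B x y = - B y x)
    (hBnd : ∀ x, (∀ y, B x y = 0) → x = 0)
    (hcyc : ∀ x y z, B (T.mul x y) z + B (T.mul y z) x + B (T.mul z x) y = 0)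
    (hsymp : ∀ x y z u,
      B (T.br x y z) u - B (T.br x y u) z + B (T.br x z u) y - B (T.br y z u) x = 0) :
    ∃ P : TernaryPreFM K A,
      (∀ x y z, B (P.dia x y) z = B y (T.mul x z)) ∧
      (∀ x y z u, B (P.tri x y z) u = - B z (T.br x y u)) ∧
      (∀ x y, sym P.dia x y = T.mul x y) ∧
      (∀ x y z, cbr P.tri x y z = T.br x y z) := by
  have hBinj : Function.Injective B := by
    rw [injective_iff_map_eq_zero]
    intro x hx
    exact hBnd x (fun y => by rw [hx, LinearMap.zero_apply])
  let e : A ≃ₗ[K] Module.Dual K A :=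
    LinearEquiv.ofInjectiveOfFinrankEq B hBinj Subspace.dual_finrank_eq.symm
  have he : ∀ f x, B (e.symm f) x = f x := by
    intro f x
    exact LinearMap.congr_fun (e.apply_symm_apply f) x
  have ext : ∀ a b : A, (∀ u, B a u = B b u) → a = b := by
    intro a b h
    exact hBinj (LinearMap.ext h)
  obtain ⟨dia, hd⟩ : ∃ d : A →ₗ[K] A →ₗ[K] A, ∀ x y z, B (d x y) z = B y (T.mul x z) := by
    refine ⟨LinearMap.mk₂ K (fun x y => e.symm (B y ∘ₗ T.mul x)) ?_ ?_ ?_ ?_, ?_⟩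
    all_goals intros
    all_goals try apply ext; intro u
    all_goals simp [he]
  obtain ⟨tri, ht⟩ : ∃ t : A →ₗ[K] A →ₗ[K] A →ₗ[K] A,
      ∀ x y z u, B (t x y z) u = - B z (T.br x y u) := by
    refine ⟨LinearMap.mk₂ K (fun x y => -(e.symm.toLinearMap ∘ₗ (T.br x y).dualMap ∘ₗ B))
      ?_ ?_ ?_ ?_, ?_⟩
    all_goals intros
    all_goals try (apply LinearMap.ext; intro z; apply ext; intro u)
    all_goals simp only [he, map_add, map_smul, LinearMap.neg_apply, LinearMap.comp_apply,
      LinearEquiv.coe_coe, LinearMap.dualMap_apply, LinearMap.add_apply, LinearMap.smul_apply,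
      map_neg, LinearMap.mk₂_apply, smul_eq_mul]
    all_goals ring
  have hsym : ∀ x y, sym dia x y = T.mul x y := by
    intro x y
    apply ext
    intro u
    have h := hcyc x y u
    simp only [sym, map_add, LinearMap.add_apply, hd]
    rw [hBskew y, hBskew x, T.mul_comm x u]
    linear_combination -h
  have hcbr : ∀ x y z, cbr tri x y z = T.br x y z := by
    intro x y z
    apply ext
    intro u
    have h := hsymp x y z u
    simp only [cbr, map_add, LinearMap.add_apply, ht]
    rw [hBskew z, hBskew x, hBskew y, T.br_skew₁₂ z x u]
    simp only [map_neg, LinearMap.neg_apply]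
    linear_combination -h
  have hF1 : ∀ x y z t u, B (F1 dia tri x y z t) u = B t (leib3 T.mul T.br x y z u) := by
    intro x y z t u
    simp only [F1, leib3, hcbr, map_sub, LinearMap.sub_apply, hd, ht]
    ring
  have hF2 : ∀ x y z t u, B (F2 dia tri x y z t) u = - B t (kmap T x y z u) := by
    intro x y z t u
    simp only [F2, kmap, hsym, map_sub, map_add, LinearMap.sub_apply, LinearMap.add_apply, hd, ht]
    rw [T.br_skew₂₃ x u, T.mul_comm u y, map_neg]
    ring
  refine ⟨⟨dia, tri, ?_, ?_, ?_, ?_, ?_, ?_, ?_⟩, hd, ht, hsym, hcbr⟩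
  · intro x y z
    rw [← LinearMap.add_apply, ← map_add]
    change _ = dia (sym dia y x) z
    rw [hsym]
    apply ext
    intro u
    rw [hd, hd, hd, T.mul_assoc]
  · intro x y z
    apply ext
    intro u
    rw [map_neg, LinearMap.neg_apply, ht, ht, T.br_skew₁₂ x y, map_neg]
  · intro a b c d z
    apply ext
    intro u
    simp only [hcbr, map_add, LinearMap.add_apply, ht]
    rw [T.fund a b c d u]
    simp only [map_add]
    ring
  · intro a b c d z
    apply ext
    intro u
    have h := congrArg (B z) (coadj T a b c d u)
    simp only [map_add, map_zero] at h
    simp only [hcbr, map_add, LinearMap.add_apply, ht]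
    rw [br_cyc T (T.br a b c) d u]
    linear_combination -h
  · intro x1 x2 x3 x4 x5
    apply ext
    intro u
    simp only [hsym, map_add, LinearMap.add_apply, hd, hF1, hc1]
  · intro x1 x2 x3 x4 x5
    apply ext
    intro u
    have h := congrArg (B x5) (hc2 x1 x2 x3 x4 u)
    rw [kmap_mul_zero T hc2 hc3] at h
    simp only [map_sub, map_neg, map_zero] at h
    simp only [hsym, map_add, LinearMap.add_apply, hd, hF2]
    rw [kmap_mul_zero T hc2 hc3, map_zero]
    linear_combination h
  · intro x1 x2 x3 x4 x5
    have hL : Lpre dia tri x1 x2 x3 x4 = leib3 T.mul T.br x1 x2 x3 x4 := by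
      simp only [Lpre, leib3, hsym, hcbr]
    apply ext
    intro u
    rw [hL]
    simp only [map_sub, LinearMap.sub_apply, hd, hF2, hc3]
    ring
end

section
/- Let (A,·,[·,·,·]) be a ternary F-manifold algebra and let N : A → A be a Nijenhuis operator, i.e. a linear map satisfying Nx·Ny = N(Nx·y + x·Ny − N(x·y)) and [Nx,Ny,Nz] = N([Nx,Ny,z] + [Nx,y,Nz] + [x,Ny,Nz] − N[Nx,y,z] − N[x,Ny,z] − N[x,y,Nz] + N²[x,y,z]) for all x,y,z ∈ A. Define the deformed products x ·_N y = Nx·y + x·Ny − N(x·y) and [x,y,z]_N = [Nx,Ny,z] + [Nx,y,Nz] + [x,Ny,Nz] − N[Nx,y,z] − N[x,Ny,z] − N[x,y,Nz] + N²[x,y,z]. Then (A, ·_N, [·,·,·]_N) is a ternary F-manifold algebra. -/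
open TensorProduct

section NijenhuisHelpers

variable {K : Type*} [Field K] {A : Type*} [AddCommGroup A] [Module K A]

/-- Polynomial functions of a scalar variable with values in a module. -/
inductive PolyFun : (K → A) → Prop
  | const (a : A) : PolyFun (fun _ => a)
  | add (f g : K → A) : PolyFun f → PolyFun g → PolyFun (fun s => f s + g s)
  | smul (f : K → A) : PolyFun f → PolyFun (fun s => s • f s)

theorem PolyFun.lin {f : K → A} (hf : PolyFun f) (L : A →ₗ[K] A) :
    PolyFun (fun s => L (f s)) := by
  induction hf with
  | const a => exact .const _
  | add f g _ _ h1 h2 => simpa only [map_add] using PolyFun.add _ _ h1 h2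
  | smul f _ h => simpa only [map_smul] using PolyFun.smul _ h

theorem PolyFun.bilin {f g : K → A} (hf : PolyFun f) (hg : PolyFun g)
    (B : A →ₗ[K] A →ₗ[K] A) : PolyFun (fun s => B (f s) (g s)) := by
  induction hf with
  | const a => exact hg.lin (B a)
  | add f g _ _ h1 h2 =>
    simpa only [map_add, LinearMap.add_apply] using PolyFun.add _ _ h1 h2
  | smul f _ h => simpa only [map_smul, LinearMap.smul_apply] using PolyFun.smul _ h

theorem PolyFun.trilin {f g h : K → A} (hf : PolyFun f) (hg : PolyFun g) (hh : PolyFun h)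
    (B : A →ₗ[K] A →ₗ[K] A →ₗ[K] A) : PolyFun (fun s => B (f s) (g s) (h s)) := by
  induction hf with
  | const a => exact hg.bilin hh (B a)
  | add f g _ _ h1 h2 =>
    simpa only [map_add, LinearMap.add_apply] using PolyFun.add _ _ h1 h2
  | smul f _ h => simpa only [map_smul, LinearMap.smul_apply] using PolyFun.smul _ h

theorem PolyFun.sub {f g : K → A} (hf : PolyFun f) (hg : PolyFun g) :
    PolyFun (fun s => f s - g s) := by
  have := PolyFun.add _ _ hf (hg.lin (-LinearMap.id))
  simpa [sub_eq_add_neg] using this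

theorem PolyFun.exists_coeff {f : K → A} (hf : PolyFun f) :
    ∃ p : ℕ →₀ A, ∀ s, f s = p.sum (fun i a => s ^ i • a) := by
  induction hf with
  | const a => exact ⟨Finsupp.single 0 a, fun s => by simp⟩
  | add f g _ _ h1 h2 =>
    obtain ⟨p, hp⟩ := h1
    obtain ⟨q, hq⟩ := h2
    refine ⟨p + q, fun s => ?_⟩
    rw [Finsupp.sum_add_index' (by simp) (by simp), ← hp, ← hq]
  | smul f _ h =>
    obtain ⟨p, hp⟩ := h
    refine ⟨p.embDomain ⟨Nat.succ, Nat.succ_injective⟩, fun s => ?_⟩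
    rw [Finsupp.sum_embDomain]
    change s • f s = _
    rw [hp]
    simp [Finsupp.sum, Finset.smul_sum, smul_smul, pow_succ']

theorem coeff_zero_of_forall [CharZero K] (n : ℕ) (b : ℕ → A)
    (h : ∀ s : K, ∑ i ∈ Finset.range n, s ^ i • b i = 0) : ∀ i < n, b i = 0 := by
  intro i hi
  rw [← Module.forall_dual_apply_eq_zero_iff K]
  intro l
  have hp : (∑ i ∈ Finset.range n, Polynomial.monomial i (l (b i))) = 0 := by
    apply Polynomial.funext
    intro s
    have := congrArg l (h s)
    simpa [Polynomial.eval_finsetSum, mul_comm] using this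
  have := congrArg (fun p => Polynomial.coeff p i) hp
  simpa [Polynomial.finsetSum_coeff, Polynomial.coeff_monomial, hi] using this

theorem poly_kill [CharZero K] (N : A →ₗ[K] A) (n : ℕ) (a : ℕ → A)
    (h : ∀ s : K, N (∑ i ∈ Finset.range n, s ^ i • a i)
      + s • ∑ i ∈ Finset.range n, s ^ i • a i = 0) :
    ∀ s : K, ∑ i ∈ Finset.range n, s ^ i • a i = 0 := by
  induction n with
  | zero => simp
  | succ n ih =>
    have han : a n = 0 := by
      have := coeff_zero_of_forall (K := K) (n + 2)
        (fun i => (if i < n + 1 then N (a i) else 0) + (if 0 < i then a (i - 1) else 0))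
        (fun s => by
          refine Eq.trans ?_ (h s)
          simp only [smul_add, Finset.sum_add_distrib]
          congr 1
          · rw [Finset.sum_range_succ]
            simp only [lt_irrefl, if_false, smul_zero, add_zero, map_sum, map_smul]
            refine Finset.sum_congr rfl fun i hi => ?_
            rw [if_pos (Finset.mem_range.1 hi)]
          · rw [Finset.sum_range_succ']
            simp [Finset.smul_sum, smul_smul, pow_succ'])
        (n + 1) (by omega)
      simpa using this
    simp only [Finset.sum_range_succ _ n, han, smul_zero, add_zero] at h ⊢
    exact ih h

theorem PolyFun.eq_zero [CharZero K] {f : K → A} (hf : PolyFun f) (N : A →ₗ[K] A)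
    (h : ∀ s, N (f s) + s • f s = 0) (s : K) : f s = 0 := by
  obtain ⟨p, hp⟩ := hf.exists_coeff
  obtain ⟨n, hn⟩ : ∃ n, p.support ⊆ Finset.range n := p.support.exists_nat_subset_range
  have hp' : ∀ s, f s = ∑ i ∈ Finset.range n, s ^ i • p i := fun s => by
    rw [hp, Finsupp.sum_of_support_subset _ hn]
    simp
  rw [hp']
  exact poly_kill N n p (fun s => by rw [← hp']; exact h s) s

/-- The deformed product. -/
def nijMul (m : A →ₗ[K] A →ₗ[K] A) (N : A →ₗ[K] A) : A →ₗ[K] A →ₗ[K] A :=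
  m ∘ₗ N + m.compl₂ N - m.compr₂ N

/-- The first-order deformed bracket. -/
def nijBr1 (b : A →ₗ[K] A →ₗ[K] A →ₗ[K] A) (N : A →ₗ[K] A) : A →ₗ[K] A →ₗ[K] A →ₗ[K] A :=
  b ∘ₗ N + b.compl₂ N + b.compr₂ (LinearMap.lcomp K A N) - b.compr₂ (LinearMap.compRight K N)

/-- The deformed bracket. -/
def nijBr (b : A →ₗ[K] A →ₗ[K] A →ₗ[K] A) (N : A →ₗ[K] A) : A →ₗ[K] A →ₗ[K] A →ₗ[K] A :=
  b.compl₁₂ N N + (b ∘ₗ N).compr₂ (LinearMap.lcomp K A N)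
    + (b.compl₂ N).compr₂ (LinearMap.lcomp K A N)
    - (nijBr1 b N).compr₂ (LinearMap.compRight K N)

theorem nijMul_apply (m : A →ₗ[K] A →ₗ[K] A) (N : A →ₗ[K] A) (x y : A) :
    nijMul m N x y = m (N x) y + m x (N y) - N (m x y) := by
  simp [nijMul]

theorem nijBr1_apply (b : A →ₗ[K] A →ₗ[K] A →ₗ[K] A) (N : A →ₗ[K] A) (x y z : A) :
    nijBr1 b N x y z = b (N x) y z + b x (N y) z + b x y (N z) - N (b x y z) := by
  simp [nijBr1]

theorem nijBr_apply (b : A →ₗ[K] A →ₗ[K] A →ₗ[K] A) (N : A →ₗ[K] A) (x y z : A) :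
    nijBr b N x y z = b (N x) (N y) z + b (N x) y (N z) + b x (N y) (N z)
          - N (b (N x) y z) - N (b x (N y) z) - N (b x y (N z))
          + N (N (b x y z)) := by
  simp [nijBr, nijBr1_apply]
  abel

/-- The one-parameter family of products. -/
def famMul (m : A →ₗ[K] A →ₗ[K] A) (N : A →ₗ[K] A) (s : K) (x y : A) : A :=
  nijMul m N x y + s • m x y

/-- The one-parameter family of brackets. -/
def famBr (b : A →ₗ[K] A →ₗ[K] A →ₗ[K] A) (N : A →ₗ[K] A) (s : K) (x y z : A) : A :=
  nijBr b N x y z + s • (nijBr1 b N x y z + s • b x y z)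

theorem PolyFun.famMul {f g : K → A} (hf : PolyFun f) (hg : PolyFun g)
    (m : A →ₗ[K] A →ₗ[K] A) (N : A →ₗ[K] A) :
    PolyFun (fun s => famMul m N s (f s) (g s)) :=
  .add _ _ (hf.bilin hg _) (.smul _ (hf.bilin hg _))

theorem PolyFun.famBr {f g h : K → A} (hf : PolyFun f) (hg : PolyFun g) (hh : PolyFun h)
    (b : A →ₗ[K] A →ₗ[K] A →ₗ[K] A) (N : A →ₗ[K] A) :
    PolyFun (fun s => famBr b N s (f s) (g s) (h s)) :=
  .add _ _ (hf.trilin hg hh _) (.smul _ (.add _ _ (hf.trilin hg hh _)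
    (.smul _ (hf.trilin hg hh _))))

theorem famMul_hom (m : A →ₗ[K] A →ₗ[K] A) (N : A →ₗ[K] A)
    (h : ∀ x y, m (N x) (N y) = N (nijMul m N x y)) (s : K) (x y : A) :
    (N + s • LinearMap.id : A →ₗ[K] A) (famMul m N s x y) =
      m ((N + s • LinearMap.id : A →ₗ[K] A) x) ((N + s • LinearMap.id : A →ₗ[K] A) y) := by
  simp only [famMul, LinearMap.add_apply, LinearMap.smul_apply, LinearMap.id_apply, map_add,
    map_smul, h, nijMul_apply, map_sub]
  module

theorem famBr_hom (b : A →ₗ[K] A →ₗ[K] A →ₗ[K] A) (N : A →ₗ[K] A)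
    (h : ∀ x y z, b (N x) (N y) (N z) = N (nijBr b N x y z)) (s : K) (x y z : A) :
    (N + s • LinearMap.id : A →ₗ[K] A) (famBr b N s x y z) =
      b ((N + s • LinearMap.id : A →ₗ[K] A) x) ((N + s • LinearMap.id : A →ₗ[K] A) y)
        ((N + s • LinearMap.id : A →ₗ[K] A) z) := by
  simp only [famBr, LinearMap.add_apply, LinearMap.smul_apply, LinearMap.id_apply, map_add,
    map_smul, h, nijBr_apply, nijBr1_apply, map_sub]
  module

/-- If the two sides of an identity are polynomial and agree after applying `N + s`,
they agree at `s = 0`. -/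
theorem PolyFun.eq_at_zero [CharZero K] {f g : K → A} (hf : PolyFun f) (hg : PolyFun g)
    (N : A →ₗ[K] A)
    (h : ∀ s, (N + s • LinearMap.id : A →ₗ[K] A) (f s) = (N + s • LinearMap.id : A →ₗ[K] A) (g s)) :
    f 0 = g 0 := by
  have := (hf.sub hg).eq_zero N (fun s => by
    have := sub_eq_zero.2 (h s)
    rw [← map_sub] at this
    simpa using this) 0
  exact sub_eq_zero.1 this

theorem famMul_zero (m : A →ₗ[K] A →ₗ[K] A) (N : A →ₗ[K] A) (x y : A) :
    famMul m N 0 x y = nijMul m N x y := by simp [famMul]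

theorem famBr_zero (b : A →ₗ[K] A →ₗ[K] A →ₗ[K] A) (N : A →ₗ[K] A) (x y z : A) :
    famBr b N 0 x y z = nijBr b N x y z := by simp [famBr]

/-- The Leibnizator of the one-parameter family. -/
def famLeib (m : A →ₗ[K] A →ₗ[K] A) (b : A →ₗ[K] A →ₗ[K] A →ₗ[K] A) (N : A →ₗ[K] A) (s : K)
    (x1 x2 x3 x4 : A) : A :=
  famBr b N s x1 x2 (famMul m N s x3 x4) - famMul m N s x3 (famBr b N s x1 x2 x4)
    - famMul m N s (famBr b N s x1 x2 x3) x4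

theorem PolyFun.famLeib {f1 f2 f3 f4 : K → A} (h1 : PolyFun f1) (h2 : PolyFun f2)
    (h3 : PolyFun f3) (h4 : PolyFun f4)
    (m : A →ₗ[K] A →ₗ[K] A) (b : A →ₗ[K] A →ₗ[K] A →ₗ[K] A) (N : A →ₗ[K] A) :
    PolyFun (fun s => famLeib m b N s (f1 s) (f2 s) (f3 s) (f4 s)) :=
  .sub (.sub (.famBr h1 h2 (.famMul h3 h4 m N) b N) (.famMul h3 (.famBr h1 h2 h4 b N) m N))
    (.famMul (.famBr h1 h2 h3 b N) h4 m N)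

theorem famLeib_zero (m : A →ₗ[K] A →ₗ[K] A) (b : A →ₗ[K] A →ₗ[K] A →ₗ[K] A) (N : A →ₗ[K] A)
    (x1 x2 x3 x4 : A) :
    famLeib m b N 0 x1 x2 x3 x4 = leib3 (nijMul m N) (nijBr b N) x1 x2 x3 x4 := by
  simp only [famLeib, leib3, famMul_zero, famBr_zero]

end NijenhuisHelpers

/-- the products deformed by a Nijenhuis operator again form a
ternary F-manifold algebra. -/
theorem stmt17 {K : Type*} [Field K] [CharZero K]
    {A : Type*} [AddCommGroup A] [Module K A]
    (T : TernaryFM K A) (N : A →ₗ[K] A)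
    (hN1 : ∀ x y, T.mul (N x) (N y) =
      N (T.mul (N x) y + T.mul x (N y) - N (T.mul x y)))
    (hN2 : ∀ x y z, T.br (N x) (N y) (N z) =
      N (T.br (N x) (N y) z + T.br (N x) y (N z) + T.br x (N y) (N z)
        - N (T.br (N x) y z) - N (T.br x (N y) z) - N (T.br x y (N z))
        + N (N (T.br x y z)))) :
    ∃ S : TernaryFM K A,
      (∀ x y, S.mul x y = T.mul (N x) y + T.mul x (N y) - N (T.mul x y)) ∧
      (∀ x y z, S.br x y z =
        T.br (N x) (N y) z + T.br (N x) y (N z) + T.br x (N y) (N z)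
          - N (T.br (N x) y z) - N (T.br x (N y) z) - N (T.br x y (N z))
          + N (N (T.br x y z))) := by
  have h1 : ∀ x y, T.mul (N x) (N y) = N (nijMul T.mul N x y) := fun x y => by
    rw [nijMul_apply, hN1]
  have h2 : ∀ x y z, T.br (N x) (N y) (N z) = N (nijBr T.br N x y z) := fun x y z => by
    rw [nijBr_apply, hN2]
  have hm := famMul_hom T.mul N h1
  have hb := famBr_hom T.br N h2
  have hl : ∀ s x1 x2 x3 x4, (N + s • LinearMap.id : A →ₗ[K] A)
      (famLeib T.mul T.br N s x1 x2 x3 x4) =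
      leib3 T.mul T.br ((N + s • LinearMap.id : A →ₗ[K] A) x1)
        ((N + s • LinearMap.id : A →ₗ[K] A) x2) ((N + s • LinearMap.id : A →ₗ[K] A) x3)
        ((N + s • LinearMap.id : A →ₗ[K] A) x4) := by
    intro s x1 x2 x3 x4
    rw [famLeib, leib3, map_sub, map_sub, hb, hm, hm, hm, hb, hb]
  have c : ∀ a : A, PolyFun (fun _ : K => a) := fun a => .const a
  refine ⟨⟨nijMul T.mul N, nijBr T.br N, ?_, ?_, ?_, ?_, ?_, ?_⟩,
    nijMul_apply _ _, nijBr_apply _ _⟩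
  · intro x y
    rw [nijMul_apply, nijMul_apply, T.mul_comm (N x) y, T.mul_comm x (N y), T.mul_comm x y]
    abel
  · intro x y z
    simp only [← famMul_zero]
    refine PolyFun.eq_at_zero (f := fun s => famMul T.mul N s (famMul T.mul N s x y) z)
      (g := fun s => famMul T.mul N s x (famMul T.mul N s y z))
      (.famMul (.famMul (c x) (c y) _ _) (c z) _ _)
      (.famMul (c x) (.famMul (c y) (c z) _ _) _ _) N (fun s => ?_)
    simp only [hm, T.mul_assoc]
  · intro x y z
    rw [nijBr_apply, nijBr_apply, T.br_skew₁₂ (N x) (N y) z, T.br_skew₁₂ (N x) y (N z),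
      T.br_skew₁₂ x (N y) (N z), T.br_skew₁₂ (N x) y z, T.br_skew₁₂ x (N y) z,
      T.br_skew₁₂ x y (N z), T.br_skew₁₂ x y z]
    simp only [map_neg]
    abel
  · intro x y z
    rw [nijBr_apply, nijBr_apply, T.br_skew₂₃ (N x) (N y) z, T.br_skew₂₃ (N x) y (N z),
      T.br_skew₂₃ x (N y) (N z), T.br_skew₂₃ (N x) y z, T.br_skew₂₃ x (N y) z,
      T.br_skew₂₃ x y (N z), T.br_skew₂₃ x y z]
    simp only [map_neg]
    abel
  · intro x1 x2 x3 x4 x5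
    simp only [← famBr_zero]
    refine PolyFun.eq_at_zero
      (f := fun s => famBr T.br N s x1 x2 (famBr T.br N s x3 x4 x5))
      (g := fun s => famBr T.br N s (famBr T.br N s x1 x2 x3) x4 x5
        + famBr T.br N s x3 (famBr T.br N s x1 x2 x4) x5
        + famBr T.br N s x3 x4 (famBr T.br N s x1 x2 x5))
      (.famBr (c _) (c _) (.famBr (c _) (c _) (c _) _ _) _ _)
      (.add _ _ (.add _ _ (.famBr (.famBr (c _) (c _) (c _) _ _) (c _) (c _) _ _)
        (.famBr (c _) (.famBr (c _) (c _) (c _) _ _) (c _) _ _))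
        (.famBr (c _) (c _) (.famBr (c _) (c _) (c _) _ _) _ _)) N (fun s => ?_)
    simp only [map_add (N + s • LinearMap.id : A →ₗ[K] A), hb]
    exact T.fund _ _ _ _ _
  · intro x1 x2 x3 x4 x5
    simp only [← famLeib_zero, ← famMul_zero]
    refine PolyFun.eq_at_zero
      (f := fun s => famLeib T.mul T.br N s (famMul T.mul N s x1 x2) x3 x4 x5)
      (g := fun s => famMul T.mul N s x1 (famLeib T.mul T.br N s x2 x3 x4 x5)
        + famMul T.mul N s x2 (famLeib T.mul T.br N s x1 x3 x4 x5))
      (.famLeib (.famMul (c _) (c _) _ _) (c _) (c _) (c _) _ _ _)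
      (.add _ _ (.famMul (c _) (.famLeib (c _) (c _) (c _) (c _) _ _ _) _ _)
        (.famMul (c _) (.famLeib (c _) (c _) (c _) (c _) _ _ _) _ _)) N (fun s => ?_)
    simp only [map_add (N + s • LinearMap.id : A →ₗ[K] A), hl, hm]
    exact T.leib _ _ _ _ _
end

section
/- Let (A,·,[·,·,·]) be a ternary F-manifold algebra, (V;ρ,μ) a representation of A, and T : V → A a relative Rota–Baxter operator on A with respect to (V;ρ,μ). Then the linear map N_T : A⊕V → A⊕V defined by N_T(x+u) = Tu (for x ∈ A, u ∈ V) is a Nijenhuis operator on the semidirect product ternary F-manifold algebra A⊕V, whose operations are (x1+v1)·(x2+v2) = x1·x2 + μ(x1)v2 + μ(x2)v1 and [x1+v1, x2+v2, x3+v3] = [x1,x2,x3] + ρ(x1,x2)v3 − ρ(x1,x3)v2 + ρ(x2,x3)v1; that is, N_T satisfies N_T(a)·N_T(b) = N_T(N_T(a)·b + a·N_T(b) − N_T(a·b)) and [N_T a, N_T b, N_T c] = N_T([N_T a, N_T b, c] + [N_T a, b, N_T c] + [a, N_T b, N_T c] − N_T[N_T a,b,c] − N_T[a,N_T b,c] −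 N_T[a,b,N_T c] + N_T²[a,b,c]) for all a,b,c ∈ A⊕V. -/
open TensorProduct

/-- `N_T(x+u) = Tu` is a Nijenhuis operator on the semidirect
product ternary F-manifold algebra `A ⊕ V`. -/
theorem stmt18 {K : Type*} [Field K] [CharZero K]
    {A V : Type*} [AddCommGroup A] [Module K A] [AddCommGroup V] [Module K V]
    (T : TernaryFM K A) (ρ : A →ₗ[K] A →ₗ[K] V →ₗ[K] V) (μ : A →ₗ[K] V →ₗ[K] V)
    (hrep : IsFMRep T ρ μ) (Tm : V →ₗ[K] A) (hrb : IsRelRB T ρ μ Tm) :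
    (∀ a b : A × V,
      sdMul T μ (nT Tm a) (nT Tm b) =
        nT Tm (sdMul T μ (nT Tm a) b + sdMul T μ a (nT Tm b) - nT Tm (sdMul T μ a b))) ∧
    (∀ a b c : A × V,
      sdBr T ρ (nT Tm a) (nT Tm b) (nT Tm c) =
        nT Tm (sdBr T ρ (nT Tm a) (nT Tm b) c + sdBr T ρ (nT Tm a) b (nT Tm c)
          + sdBr T ρ a (nT Tm b) (nT Tm c)
          - nT Tm (sdBr T ρ (nT Tm a) b c) - nT Tm (sdBr T ρ a (nT Tm b) c)
          - nT Tm (sdBr T ρ a b (nT Tm c))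
          + nT Tm (nT Tm (sdBr T ρ a b c)))) := by
  obtain ⟨h1, h2⟩ := hrb
  have hs : ∀ x y (u : V), ρ x y u = - ρ y x u := fun x y u => by
    rw [hrep.1.1 x y]; rfl
  constructor
  · intro a b
    simp [sdMul, nT, h1, add_comm]
  · intro a b c
    simp only [sdBr, nT, h2, Prod.mk.injEq, Prod.snd_add, Prod.snd_sub, map_zero, sub_zero,
      add_zero, zero_add, sub_self, zero_sub, and_true]
    rw [hs (Tm c.2) (Tm a.2)]
    congr 1
    abel
end
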